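/- Fix v₀ ∈ ℝ and set H₀ = ∂_rΦ(v₀,m) + Φ(v₀,m)/m. Then for every v ∈ ℝ, ∂²_rΦ(v, m) = ∂²_rΦ(v₀, m) + (2/m²)·(Φ(v,m) − Φ(v₀,m)) − (H₀/m²)·(v − v₀) + (1/m³)·∫_{v₀}^{v} Φ(w, m) dw. -/

import Mathlib

/-!
At the horizon `r = m` the wave operator degenerates to `2 ∂_v H`, where `H = ∂_rΦ + Φ/m`, so `H` is
conserved there. The coefficient of `∂_r²Φ` vanishes to second order at the horizon and that of
`∂_rΦ` to first order, so the `r`-derivative of the wave equation at `r = m` relates `∂_v∂_r²Φ` to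
`∂_rΦ`, `∂_v∂_rΦ` and `∂_vΦ` alone. Eliminating `∂_rΦ` through `H` and `∂_v∂_rΦ` through `∂_v H = 0`
leaves `∂_v∂_r²Φ = (2/m²) ∂_vΦ - H/m² + Φ/m³`, which integrates in `v`.
-/

open Filter Function Topology

section PartialDerivatives

variable {𝕜 E F : Type*} [NontriviallyNormedField 𝕜] [NormedAddCommGroup E] [NormedSpace 𝕜 E]
  [NormedAddCommGroup F] [NormedSpace 𝕜 F]

lemma hasDerivAt_right_of_differentiableAt_uncurry {f : E → 𝕜 → F} {x : E} {y : 𝕜}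
    (hf : DifferentiableAt 𝕜 (uncurry f) (x, y)) :
    HasDerivAt (f x) (fderiv 𝕜 (uncurry f) (x, y) (0, 1)) y :=
  hf.hasFDerivAt.comp_hasDerivAt y ((hasDerivAt_const y x).prodMk (hasDerivAt_id y))

lemma hasDerivAt_left_of_differentiableAt_uncurry {f : 𝕜 → E → F} {x : 𝕜} {y : E}
    (hf : DifferentiableAt 𝕜 (uncurry f) (x, y)) :
    HasDerivAt (f · y) (fderiv 𝕜 (uncurry f) (x, y) (1, 0)) x :=
  hf.hasFDerivAt.comp_hasDerivAt (f := (·, y)) x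
    ((hasDerivAt_id x).prodMk (hasDerivAt_const x y))

lemma differentiableAt_right_of_contDiffAt_uncurry {f : E → 𝕜 → F} {x : E} {y : 𝕜}
    {n : WithTop ℕ∞} (hf : ContDiffAt 𝕜 n (uncurry f) (x, y)) (hn : n ≠ 0) :
    DifferentiableAt 𝕜 (f x) y :=
  (hasDerivAt_right_of_differentiableAt_uncurry (hf.differentiableAt hn)).differentiableAt

lemma differentiableAt_left_of_contDiffAt_uncurry {f : 𝕜 → E → F} {x : 𝕜} {y : E}
    {n : WithTop ℕ∞} (hf : ContDiffAt 𝕜 n (uncurry f) (x, y)) (hn : n ≠ 0) :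
    DifferentiableAt 𝕜 (f · y) x :=
  (hasDerivAt_left_of_differentiableAt_uncurry (hf.differentiableAt hn)).differentiableAt

lemma contDiffAt_uncurry_deriv_right {f : E → 𝕜 → F} {p : E × 𝕜} {k n : WithTop ℕ∞}
    (hf : ContDiffAt 𝕜 n (uncurry f) p) (hkn : k + 1 ≤ n) :
    ContDiffAt 𝕜 k (uncurry fun x y => deriv (f x) y) p := by
  have hcomp : ContDiffAt 𝕜 n (uncurry fun q : E × 𝕜 => f q.1) (p, p.2) :=
    ContDiffAt.comp (g := uncurry f) (f := fun q : (E × 𝕜) × 𝕜 => (q.1.1, q.2)) (p, p.2) hf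
      (by fun_prop)
  exact (hcomp.fderiv contDiffAt_snd hkn).clm_apply contDiffAt_const

lemma contDiffAt_uncurry_deriv_left {f : 𝕜 → E → F} {p : 𝕜 × E} {k n : WithTop ℕ∞}
    (hf : ContDiffAt 𝕜 n (uncurry f) p) (hkn : k + 1 ≤ n) :
    ContDiffAt 𝕜 k (uncurry fun x y => deriv (f · y) x) p := by
  have hswap : ContDiffAt 𝕜 n (uncurry fun y x => f x y) p.swap :=
    ContDiffAt.comp (g := uncurry f) (f := Prod.swap) p.swap hf
      (contDiffAt_snd.prodMk contDiffAt_fst)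
  exact ContDiffAt.comp (f := Prod.swap) p (contDiffAt_uncurry_deriv_right hswap hkn)
    (contDiffAt_snd.prodMk contDiffAt_fst)

lemma deriv_deriv_comm {f : 𝕜 → 𝕜 → F} {x y : 𝕜} {n : WithTop ℕ∞}
    (hf : ContDiffAt 𝕜 n (uncurry f) (x, y)) (hn : minSmoothness 𝕜 2 ≤ n) :
    deriv (fun t => deriv (f · t) x) y = deriv (fun s => deriv (f s) y) x := by
  have hf₂ : ContDiffAt 𝕜 2 (uncurry f) (x, y) := hf.of_le (le_minSmoothness.trans hn)
  have hdiff : ∀ᶠ p in 𝓝 (x, y), DifferentiableAt 𝕜 (uncurry f) p :=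
    (hf₂.eventually (by simp)).mono fun _ hp => hp.differentiableAt two_ne_zero
  have hfderiv : DifferentiableAt 𝕜 (fderiv 𝕜 (uncurry f)) (x, y) :=
    (hf₂.fderiv_right (m := 1) (by norm_num)).differentiableAt one_ne_zero
  have hleft : (fun t => deriv (f · t) x) =ᶠ[𝓝 y] fun t => fderiv 𝕜 (uncurry f) (x, t) (1, 0) :=
    ((Continuous.prodMk_right x).continuousAt.eventually hdiff).mono fun _ ht =>
      (hasDerivAt_left_of_differentiableAt_uncurry ht).deriv
  have hright : (fun s => deriv (f s) y) =ᶠ[𝓝 x] fun s => fderiv 𝕜 (uncurry f) (s, y) (0, 1) :=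
    ((Continuous.prodMk_left y).continuousAt.eventually hdiff).mono fun _ hs =>
      (hasDerivAt_right_of_differentiableAt_uncurry hs).deriv
  have hfderiv_right : HasDerivAt (fun t => fderiv 𝕜 (uncurry f) (x, t))
      (fderiv 𝕜 (fderiv 𝕜 (uncurry f)) (x, y) (0, 1)) y :=
    hasDerivAt_right_of_differentiableAt_uncurry (f := curry (fderiv 𝕜 (uncurry f))) hfderiv
  have hfderiv_left : HasDerivAt (fun s => fderiv 𝕜 (uncurry f) (s, y))
      (fderiv 𝕜 (fderiv 𝕜 (uncurry f)) (x, y) (1, 0)) x :=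
    hasDerivAt_left_of_differentiableAt_uncurry (f := curry (fderiv 𝕜 (uncurry f))) hfderiv
  calc deriv (fun t => deriv (f · t) x) y
      = fderiv 𝕜 (fderiv 𝕜 (uncurry f)) (x, y) (0, 1) (1, 0) := by
        simpa [hleft.deriv_eq] using (hfderiv_right.clm_apply (hasDerivAt_const y (1, 0))).deriv
    _ = fderiv 𝕜 (fderiv 𝕜 (uncurry f)) (x, y) (1, 0) (0, 1) := hf.isSymmSndFDerivAt hn _ _
    _ = deriv (fun s => deriv (f s) y) x := by
        simpa [hright.deriv_eq] using
          (hfderiv_left.clm_apply (hasDerivAt_const x (0, 1))).deriv.symm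

end PartialDerivatives

/-- The spherically symmetric wave operator of the extreme Reissner–Nordström black hole of mass `m`
in ingoing Eddington–Finkelstein coordinates `(v, r)`, applied to `Φ`. A field is a function of
both coordinates, `v` first, and each partial derivative is a one-variable `deriv`. -/
noncomputable def waveOperator (m : ℝ) (Φ : ℝ → ℝ → ℝ) (v r : ℝ) : ℝ :=
  ((r - m) / r) ^ 2 * deriv (deriv (Φ v)) r
    + 2 * ((r - m) / r ^ 2) * deriv (Φ v) r
    + 2 * deriv (fun w => deriv (Φ w) r) v
    + (2 / r) * deriv (fun w => Φ w r) v

/-- The Aretakis quantity `H₀(v) = ∂_rΦ(v, m) + Φ(v, m)/m`, the quantity conserved along the horizon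
`r = m`. -/
noncomputable def aretakisQuantity (m : ℝ) (Φ : ℝ → ℝ → ℝ) (v : ℝ) : ℝ :=
  deriv (Φ v) m + Φ v m / m

section Horizon

variable {m : ℝ} {Φ : ℝ → ℝ → ℝ}

lemma hasDerivAt_aretakisQuantity {v : ℝ} (hΦ : ContDiffAt ℝ 2 (uncurry Φ) (v, m)) :
    HasDerivAt (aretakisQuantity m Φ) (waveOperator m Φ v m / 2) v := by
  have hΦr : ContDiffAt ℝ 1 (uncurry fun w r => deriv (Φ w) r) (v, m) :=
    contDiffAt_uncurry_deriv_right hΦ (by norm_num)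
  have hv := (differentiableAt_left_of_contDiffAt_uncurry hΦ two_ne_zero).hasDerivAt
  have hrv := (differentiableAt_left_of_contDiffAt_uncurry hΦr one_ne_zero).hasDerivAt
  refine (hrv.add (hv.div_const m)).congr_deriv ?_
  simp only [waveOperator, sub_self, zero_div]
  ring

theorem aretakisQuantity_conserved (hΦ : ∀ v, ContDiffAt ℝ 2 (uncurry Φ) (v, m))
    (hwave : ∀ v, waveOperator m Φ v m = 0) (v v₀ : ℝ) :
    aretakisQuantity m Φ v = aretakisQuantity m Φ v₀ := by
  have hderiv : ∀ w, HasDerivAt (aretakisQuantity m Φ) 0 w := fun w => by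
    simpa [hwave w] using hasDerivAt_aretakisQuantity (hΦ w)
  exact is_const_of_deriv_eq_zero (fun w => (hderiv w).differentiableAt)
    (fun w => (hderiv w).deriv) v v₀

lemma hasDerivAt_waveOperator_horizon (hm : m ≠ 0) {v : ℝ}
    (hΦ : ContDiffAt ℝ 3 (uncurry Φ) (v, m)) :
    HasDerivAt (waveOperator m Φ v)
      (2 / m ^ 2 * deriv (Φ v) m + 2 * deriv (fun w => deriv (deriv (Φ w)) m) v
        + 2 / m * deriv (fun w => deriv (Φ w) m) v - 2 / m ^ 2 * deriv (fun w => Φ w m) v) m := by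
  have hΦr : ContDiffAt ℝ 2 (uncurry fun w r => deriv (Φ w) r) (v, m) :=
    contDiffAt_uncurry_deriv_right hΦ (by norm_num)
  have hΦrr : ContDiffAt ℝ 1 (uncurry fun w r => deriv (deriv (Φ w)) r) (v, m) :=
    contDiffAt_uncurry_deriv_right hΦr (by norm_num)
  have hΦv : ContDiffAt ℝ 2 (uncurry fun u r => deriv (fun w => Φ w r) u) (v, m) :=
    contDiffAt_uncurry_deriv_left hΦ (by norm_num)
  have hΦrv : ContDiffAt ℝ 1 (uncurry fun u r => deriv (fun w => deriv (Φ w) r) u) (v, m) :=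
    contDiffAt_uncurry_deriv_left hΦr (by norm_num)
  have hr := (differentiableAt_right_of_contDiffAt_uncurry hΦr two_ne_zero).hasDerivAt
  have hrr := (differentiableAt_right_of_contDiffAt_uncurry hΦrr one_ne_zero).hasDerivAt
  have hv := (differentiableAt_right_of_contDiffAt_uncurry hΦv two_ne_zero).hasDerivAt
  have hrv := (differentiableAt_right_of_contDiffAt_uncurry hΦrv one_ne_zero).hasDerivAt
  rw [deriv_deriv_comm hΦ (by rw [minSmoothness_of_isRCLikeNormedField]; norm_num)] at hv
  rw [deriv_deriv_comm hΦr (by simp)] at hrv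
  have hlin : HasDerivAt (fun r => r - m) 1 m := (hasDerivAt_id m).sub_const m
  have hcoeff_rr : HasDerivAt (fun r => ((r - m) / r) ^ 2) 0 m := by
    simpa using (hlin.fun_div (hasDerivAt_id m) hm).fun_pow 2
  have hcoeff_r : HasDerivAt (fun r => 2 * ((r - m) / r ^ 2)) (2 / m ^ 2) m := by
    refine ((hlin.fun_div (hasDerivAt_pow 2 m) (pow_ne_zero 2 hm)).const_mul 2).congr_deriv ?_
    field_simp
    ring
  have hcoeff_v : HasDerivAt (fun r => 2 / r) (-(2 / m ^ 2)) m := by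
    simpa [neg_div] using (hasDerivAt_const m (2 : ℝ)).fun_div (hasDerivAt_id m) hm
  refine ((((hcoeff_rr.mul hrr).add (hcoeff_r.mul hr)).add (hrv.const_mul 2)).add
    (hcoeff_v.mul hv)).congr_deriv ?_
  simp only [sub_self, zero_div]
  ring

theorem hasDerivAt_deriv_deriv_horizon (hm : m ≠ 0) {v : ℝ}
    (hΦ : ContDiffAt ℝ 3 (uncurry Φ) (v, m)) (hwave : ∀ᶠ r in 𝓝 m, waveOperator m Φ v r = 0) :
    HasDerivAt (fun w => deriv (deriv (Φ w)) m)
      (2 / m ^ 2 * deriv (fun w => Φ w m) v - aretakisQuantity m Φ v / m ^ 2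
        + 1 / m ^ 3 * Φ v m) v := by
  have hΦr : ContDiffAt ℝ 2 (uncurry fun w r => deriv (Φ w) r) (v, m) :=
    contDiffAt_uncurry_deriv_right hΦ (by norm_num)
  have hΦrr : ContDiffAt ℝ 1 (uncurry fun w r => deriv (deriv (Φ w)) r) (v, m) :=
    contDiffAt_uncurry_deriv_right hΦr (by norm_num)
  have hwave_horizon : waveOperator m Φ v m = 0 := hwave.self_of_nhds
  have hwave_deriv := (hasDerivAt_waveOperator_horizon hm hΦ).unique
    ((hasDerivAt_const m 0).congr_of_eventuallyEq hwave)
  have hrr := (differentiableAt_left_of_contDiffAt_uncurry hΦrr one_ne_zero).hasDerivAt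
  refine hrr.congr_deriv ?_
  simp only [waveOperator, sub_self, zero_div] at hwave_horizon
  rw [aretakisQuantity]
  linear_combination hwave_deriv / 2 - hwave_horizon / (2 * m)

theorem second_transverse_derivative_integrated_general (hm : m ≠ 0)
    (hΦ : ∀ v, ContDiffAt ℝ 3 (uncurry Φ) (v, m))
    (hwave : ∀ v, ∀ᶠ r in 𝓝 m, waveOperator m Φ v r = 0) (v₀ v : ℝ) :
    deriv (deriv (Φ v)) m
      = deriv (deriv (Φ v₀)) m
        + (2 / m ^ 2) * (Φ v m - Φ v₀ m)
        - (aretakisQuantity m Φ v₀ / m ^ 2) * (v - v₀)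
        + (1 / m ^ 3) * ∫ w in v₀..v, Φ w m := by
  have hΦv : ∀ w, HasDerivAt (Φ · m) (deriv (Φ · m) w) w := fun w =>
    (differentiableAt_left_of_contDiffAt_uncurry (hΦ w) three_ne_zero).hasDerivAt
  have hcont : Continuous fun w => Φ w m :=
    continuous_iff_continuousAt.2 fun w => (hΦv w).continuousAt
  have hconserved : ∀ w, aretakisQuantity m Φ w = aretakisQuantity m Φ v₀ := fun w =>
    aretakisQuantity_conserved (fun u => (hΦ u).of_le (by norm_num))
      (fun u => (hwave u).self_of_nhds) w v₀
  have hderiv : ∀ w, HasDerivAt (fun w => deriv (deriv (Φ w)) m - 2 / m ^ 2 * Φ w m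
      + aretakisQuantity m Φ v₀ / m ^ 2 * w) (1 / m ^ 3 * Φ w m) w := fun w => by
    refine (((hasDerivAt_deriv_deriv_horizon hm (hΦ w) (hwave w)).sub
      ((hΦv w).const_mul (2 / m ^ 2))).add
        ((hasDerivAt_id w).const_mul (aretakisQuantity m Φ v₀ / m ^ 2))).congr_deriv ?_
    rw [hconserved w]
    ring
  have hftc := intervalIntegral.integral_eq_sub_of_hasDerivAt (a := v₀) (b := v)
    (fun w _ => hderiv w) ((hcont.const_mul _).intervalIntegrable _ _)
  rw [intervalIntegral.integral_const_mul] at hftc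
  linear_combination -hftc

end Horizon

/-- Integrated form of the evolution of the second transverse derivative at the
horizon (equation (pr2h) of the paper): with `H₀ = ∂_rΦ(v₀,m) + Φ(v₀,m)/m`,
`∂²_rΦ(v,m) = ∂²_rΦ(v₀,m) + (2/m²)(Φ(v,m) - Φ(v₀,m)) - (H₀/m²)(v - v₀)
+ (1/m³)·∫_{v₀}^v Φ(w,m) dw` for every `v`. -/
theorem second_transverse_derivative_integrated (m : ℝ) (hm : 0 < m)
    (Φ : ℝ → ℝ → ℝ) (hΦ : ContDiff ℝ (⊤ : ℕ∞) (Function.uncurry Φ))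
    (hwave : ∀ v r : ℝ, 0 < r →
      ((r - m) / r) ^ 2 * deriv (deriv (Φ v)) r
        + 2 * ((r - m) / r ^ 2) * deriv (Φ v) r
        + 2 * deriv (fun w => deriv (Φ w) r) v
        + (2 / r) * deriv (fun w => Φ w r) v = 0)
    (v₀ : ℝ) :
    ∀ v : ℝ, deriv (deriv (Φ v)) m
      = deriv (deriv (Φ v₀)) m
        + (2 / m ^ 2) * (Φ v m - Φ v₀ m)
        - ((deriv (Φ v₀) m + Φ v₀ m / m) / m ^ 2) * (v - v₀)
        + (1 / m ^ 3) * ∫ w in v₀..v, Φ w m :=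
  second_transverse_derivative_integrated_general hm.ne'
    (fun _ => hΦ.contDiffAt.of_le (WithTop.coe_le_coe.2 le_top))
    (fun v => (eventually_gt_nhds hm).mono (hwave v)) v₀
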